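/- (Main embedding theorem.) Let C be a nontrivial monoidal †-category, enriched in commutative monoids, with a simple tensor unit, a zero object, finite †-biproducts and †-equalizers of all parallel pairs (so that C has all finite †-limits). Then the involutive commutative semiring S of scalars (endomorphisms of the tensor unit I, with addition from the enrichment, multiplication by composition, and involution a ↦ a†) embeds into an involutive field of characteristic 0 with orderable fixed field: there exist a field F with CharZero F, a ring homomorphism σ : F → F with σ ∘ σ = id, and an injective map φ : S → F preserving 0, 1, addition and multiplication, such that φ(a†) = σ(φ a) for all scalars a, and such that the fixed subfield {x ∈ F | σ x = x} admits a linear order making it a linearly ordered field. -/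

import Mathlib

/-!
The argument has a categorical half and an algebraic half.

For a parallel pair, the range projection `p = e† ≫ e` of a †-equalizer `e` is self-adjoint, equalizes
the pair, and fixes every morphism equalizing it (`exists_proj`). Choosing suitable parallel pairs on a
double `X ⊕ X` and computing the entries of `p` gives three facts. Addition of parallel morphisms is
cancellative (`hom_add_right_cancel`), so scalars embed in their ring of formal differences. That ring
has no zero divisors (`scalar_domain`; this is where simplicity of the unit enters). Its involution is
anisotropic: `∑ r_k r_k† = 0` forces all `r_k = 0` (`scalar_anisotropic`).

Algebraically, the involution extends to the fraction field `F` of the ring of differences. On the fixed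
field `r r† = r²`, so anisotropy, after clearing denominators, says that `-1` is not a sum of squares
there. By Artin–Schreier (`exists_positive_cone`) the fixed field is orderable, and hence `F` has
characteristic zero (`domain_embedding`).
-/

open CategoryTheory CategoryTheory.Limits CategoryTheory.MonoidalCategory

universe v u

/-- A †-category structure: a contravariant, identity-on-objects, involutive
assignment of morphisms. -/
structure DaggerData (C : Type u) [Category.{v} C] where
  dag : ∀ {A B : C}, (A ⟶ B) → (B ⟶ A)
  dag_id : ∀ A : C, dag (𝟙 A) = 𝟙 A
  dag_comp : ∀ {A B E : C} (f : A ⟶ B) (g : B ⟶ E), dag (f ≫ g) = dag g ≫ dag f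
  dag_dag : ∀ {A B : C} (f : A ⟶ B), dag (dag f) = f

/-- Enrichment in commutative monoids: composition is bilinear and
zero morphisms are absorbing. -/
structure CMonEnriched (C : Type u) [Category.{v} C]
    [∀ X Y : C, AddCommMonoid (X ⟶ Y)] : Prop where
  comp_add : ∀ {X Y Z : C} (f : X ⟶ Y) (g h : Y ⟶ Z), f ≫ (g + h) = f ≫ g + f ≫ h
  add_comp : ∀ {X Y Z : C} (f g : X ⟶ Y) (h : Y ⟶ Z), (f + g) ≫ h = f ≫ h + g ≫ h
  comp_zero : ∀ {X Y Z : C} (f : X ⟶ Y), f ≫ (0 : Y ⟶ Z) = 0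
  zero_comp : ∀ {X Y Z : C} (f : Y ⟶ Z), (0 : X ⟶ Y) ≫ f = 0

/-- Existence of finite †-biproducts. -/
def HasFiniteDagBiproducts {C : Type u} [Category.{v} C]
    [∀ X Y : C, AddCommMonoid (X ⟶ Y)] (D : DaggerData C) : Prop :=
  ∀ (n : ℕ) (A : Fin n → C), ∃ (P : C) (i : ∀ k, A k ⟶ P),
    (∀ k, i k ≫ D.dag (i k) = 𝟙 (A k)) ∧
    (∀ k j, k ≠ j → i k ≫ D.dag (i j) = 0) ∧
    ∑ k, D.dag (i k) ≫ i k = 𝟙 P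

/-- Existence of †-equalizers of all parallel pairs: equalizers that are isometries. -/
def HasDagEqualizers {C : Type u} [Category.{v} C] (D : DaggerData C) : Prop :=
  ∀ {X Y : C} (u v : X ⟶ Y), ∃ (E : C) (e : E ⟶ X),
    e ≫ u = e ≫ v ∧ e ≫ D.dag e = 𝟙 E ∧
    ∀ {W : C} (w : W ⟶ X), w ≫ u = w ≫ v → ∃! t : W ⟶ E, t ≫ e = w

/-! ### Daggers, biproducts and cancellation -/

/-- The range projection `p = e† ≫ e` of a †-equalizer `e` of `u` and `v`. It equalizes `u` and `v`,
and it fixes every morphism that does. -/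
lemma exists_proj {C : Type u} [Category.{v} C] {D : DaggerData C}
    (heq : HasDagEqualizers D) {X Y : C} (u v : X ⟶ Y) :
    ∃ p : X ⟶ X, D.dag p = p ∧ p ≫ u = p ≫ v ∧
      ∀ {W : C} (w : W ⟶ X), w ≫ u = w ≫ v → w ≫ p = w := by
  obtain ⟨E, e, he, hiso, huniv⟩ := heq u v
  refine ⟨D.dag e ≫ e, by rw [D.dag_comp, D.dag_dag], by rw [Category.assoc, he, Category.assoc],
    fun w hw => ?_⟩
  obtain ⟨t, rfl, -⟩ := huniv w hw
  rw [Category.assoc, ← Category.assoc e, hiso, Category.id_comp]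

section Dagger

variable {C : Type u} [Category.{v} C] [∀ X Y : C, AddCommMonoid (X ⟶ Y)]

lemma CMonEnriched.sum_comp (En : CMonEnriched C) {X Y Z : C} {ι : Type*} (s : Finset ι)
    (f : ι → (X ⟶ Y)) (g : Y ⟶ Z) : (∑ k ∈ s, f k) ≫ g = ∑ k ∈ s, f k ≫ g :=
  map_sum (⟨⟨fun f => f ≫ g, En.zero_comp g⟩, fun f f' => En.add_comp f f' g⟩ :
    (X ⟶ Y) →+ (X ⟶ Z)) f s

lemma CMonEnriched.comp_sum (En : CMonEnriched C) {X Y Z : C} {ι : Type*} (s : Finset ι)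
    (f : X ⟶ Y) (g : ι → (Y ⟶ Z)) : f ≫ (∑ k ∈ s, g k) = ∑ k ∈ s, f ≫ g k :=
  map_sum (⟨⟨fun g => f ≫ g, En.comp_zero f⟩, fun g g' => En.comp_add f g g'⟩ :
    (Y ⟶ Z) →+ (X ⟶ Z)) g s

variable {D : DaggerData C}

/-- The binary †-biproduct `A ⊕ A`. -/
lemma exists_double (hbp : HasFiniteDagBiproducts D) (A : C) :
    ∃ (P : C) (i j : A ⟶ P), i ≫ D.dag i = 𝟙 A ∧ j ≫ D.dag j = 𝟙 A ∧
      i ≫ D.dag j = 0 ∧ j ≫ D.dag i = 0 ∧ D.dag i ≫ i + D.dag j ≫ j = 𝟙 P := by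
  obtain ⟨P, i, h₁, h₂, h₃⟩ := hbp 2 (fun _ => A)
  refine ⟨P, i 0, i 1, h₁ 0, h₁ 1, h₂ 0 1 (by decide), h₂ 1 0 (by decide), ?_⟩
  rw [← h₃, Fin.sum_univ_two]

lemma dag_zero [HasZeroObject C] (En : CMonEnriched C) {A B : C} :
    D.dag (0 : A ⟶ B) = 0 := by
  obtain ⟨Z, hZ⟩ := HasZeroObject.zero (C := C)
  have h : (0 : A ⟶ B) = (0 : A ⟶ Z) ≫ (0 : Z ⟶ B) := (En.comp_zero _).symm
  rw [h, D.dag_comp, hZ.eq_of_src (D.dag (0 : A ⟶ Z)) 0, En.comp_zero]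

/-- The dagger is additive because the sum is determined by the †-biproduct: with `d` the diagonal of
`A ⊕ A` and `h` the copairing of `f` and `g`, `f + g = d ≫ h` and `d†` is the codiagonal. -/
lemma dag_add (En : CMonEnriched C) (hbp : HasFiniteDagBiproducts D) {A B : C} (f g : A ⟶ B) :
    D.dag (f + g) = D.dag f + D.dag g := by
  obtain ⟨P, i, j, hii, hjj, hij, hji, hP⟩ := exists_double hbp A
  have hd : D.dag (i + j) = D.dag i + D.dag j := by
    have h₁ : i ≫ D.dag (i + j) = 𝟙 A := by
      rw [← D.dag_dag i, ← D.dag_comp, D.dag_dag, En.add_comp, hii, hji, add_zero, D.dag_id]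
    have h₂ : j ≫ D.dag (i + j) = 𝟙 A := by
      rw [← D.dag_dag j, ← D.dag_comp, D.dag_dag, En.add_comp, hjj, hij, zero_add, D.dag_id]
    rw [← Category.id_comp (D.dag (i + j)), ← hP, En.add_comp, Category.assoc, Category.assoc,
      h₁, h₂, Category.comp_id, Category.comp_id]
  have hi : i ≫ (D.dag i ≫ f + D.dag j ≫ g) = f := by
    rw [En.comp_add, ← Category.assoc, ← Category.assoc, hii, hij, En.zero_comp, add_zero,
      Category.id_comp]
  have hj : j ≫ (D.dag i ≫ f + D.dag j ≫ g) = g := by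
    rw [En.comp_add, ← Category.assoc, ← Category.assoc, hjj, hji, En.zero_comp, zero_add,
      Category.id_comp]
  generalize D.dag i ≫ f + D.dag j ≫ g = h at hi hj
  rw [← hi, ← hj, ← En.add_comp, D.dag_comp, hd, En.comp_add, ← D.dag_comp, ← D.dag_comp]

lemma dag_sum [HasZeroObject C] (En : CMonEnriched C) (hbp : HasFiniteDagBiproducts D)
    {A B : C} {ι : Type*} (s : Finset ι) (f : ι → (A ⟶ B)) :
    D.dag (∑ k ∈ s, f k) = ∑ k ∈ s, D.dag (f k) :=
  map_sum (⟨⟨fun f => D.dag f, dag_zero En⟩, fun f g => dag_add En hbp f g⟩ :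
    (A ⟶ B) →+ (B ⟶ A)) f s

/-- Addition of parallel morphisms is cancellative. The projection `p` onto the †-equalizer of the
copairings `(f, h)` and `(g, h)` fixes the second injection and the diagonal; being self-adjoint, it
then fixes the first injection too. -/
lemma hom_add_right_cancel [HasZeroObject C] (En : CMonEnriched C)
    (hbp : HasFiniteDagBiproducts D) (heq : HasDagEqualizers D) {A B : C} {f g h : A ⟶ B}
    (H : f + h = g + h) : f = g := by
  obtain ⟨P, i, j, hii, hjj, hij, hji, hP⟩ := exists_double hbp A
  have hi (f h : A ⟶ B) : i ≫ (D.dag i ≫ f + D.dag j ≫ h) = f := by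
    rw [En.comp_add, ← Category.assoc, ← Category.assoc, hii, hij, En.zero_comp, add_zero,
      Category.id_comp]
  have hj (f h : A ⟶ B) : j ≫ (D.dag i ≫ f + D.dag j ≫ h) = h := by
    rw [En.comp_add, ← Category.assoc, ← Category.assoc, hjj, hji, En.zero_comp, zero_add,
      Category.id_comp]
  obtain ⟨p, hp, hpuv, hfix⟩ := exists_proj heq
    (D.dag i ≫ f + D.dag j ≫ h) (D.dag i ≫ g + D.dag j ≫ h)
  have hjp : j ≫ p = j := hfix j (by rw [hj, hj])
  have hdp : (i + j) ≫ p = i + j := hfix (i + j) (by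
    rw [En.add_comp, En.add_comp, hi, hj, hi, hj, H])
  have hpj : p ≫ D.dag j = D.dag j := by
    have := congrArg D.dag hjp
    rwa [D.dag_comp, hp] at this
  have hipi : i ≫ p ≫ D.dag i = 𝟙 A := by
    have := congrArg (fun w => w ≫ D.dag i) hdp
    simpa only [En.add_comp, hjp, hii, hji, add_zero, Category.assoc] using this
  have hip : i ≫ p = i := by
    calc i ≫ p = (i ≫ p ≫ D.dag i) ≫ i + (i ≫ p ≫ D.dag j) ≫ j := by
          rw [← Category.comp_id (i ≫ p), ← hP]
          simp only [En.comp_add, Category.assoc]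
      _ = i := by rw [hipi, hpj, hij, En.zero_comp, add_zero, Category.id_comp]
  have hiuv := congrArg (fun w => i ≫ w) hpuv
  rwa [← Category.assoc i p, ← Category.assoc i p, hip, hi, hi] at hiuv

/-- Nondegeneracy for formal differences: `(f - g) ≫ (f - g)† = 0` forces `f = g`. For the pairings
`(f, g)` and `(g, f)` into `Z ⊕ Z`, the projection `p` onto the †-equalizer of their daggers fixes
`(f, g)` and the diagonal, and sends `(g, f)` to `(f, g)`. -/
lemma eq_of_diff_norm_eq_zero [HasZeroObject C] (En : CMonEnriched C)
    (hbp : HasFiniteDagBiproducts D) (heq : HasDagEqualizers D) {Y Z : C} {f g : Y ⟶ Z}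
    (H : f ≫ D.dag f + g ≫ D.dag g = f ≫ D.dag g + g ≫ D.dag f) : f = g := by
  obtain ⟨P, i, j, hii, hjj, hij, hji, hP⟩ := exists_double hbp Z
  have hi (a b : Y ⟶ Z) : (a ≫ i + b ≫ j) ≫ D.dag i = a := by
    rw [En.add_comp, Category.assoc, Category.assoc, hii, hji, En.comp_zero, add_zero,
      Category.comp_id]
  have hj (a b : Y ⟶ Z) : (a ≫ i + b ≫ j) ≫ D.dag j = b := by
    rw [En.add_comp, Category.assoc, Category.assoc, hij, hjj, En.comp_zero, zero_add,
      Category.comp_id]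
  have hdag (a b : Y ⟶ Z) :
      D.dag (a ≫ i + b ≫ j) = D.dag i ≫ D.dag a + D.dag j ≫ D.dag b := by
    rw [dag_add En hbp, D.dag_comp, D.dag_comp]
  have hpair (a b c d : Y ⟶ Z) : (a ≫ i + b ≫ j) ≫ D.dag (c ≫ i + d ≫ j) =
      a ≫ D.dag c + b ≫ D.dag d := by
    rw [hdag, En.comp_add, ← Category.assoc, ← Category.assoc, hi, hj]
  have hdiag (c d : Y ⟶ Z) : (i + j) ≫ D.dag (c ≫ i + d ≫ j) = D.dag c + D.dag d := by
    rw [hdag, En.comp_add, En.add_comp, En.add_comp, ← Category.assoc, ← Category.assoc,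
      ← Category.assoc, ← Category.assoc, hii, hji, hij, hjj, En.zero_comp, En.zero_comp,
      Category.id_comp, Category.id_comp, add_zero, zero_add]
  obtain ⟨p, hp, hpuv, hfix⟩ := exists_proj heq
    (D.dag (f ≫ i + g ≫ j)) (D.dag (g ≫ i + f ≫ j))
  have hfp : (f ≫ i + g ≫ j) ≫ p = f ≫ i + g ≫ j := hfix _ (by rw [hpair, hpair, H])
  have hdp : (i + j) ≫ p = i + j := hfix _ (by rw [hdiag, hdiag, add_comm])
  have hswap : (g ≫ i + f ≫ j) ≫ p = f ≫ i + g ≫ j := by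
    have := congrArg D.dag hpuv
    rw [D.dag_comp, D.dag_comp, D.dag_dag, D.dag_dag, hp, hfp] at this
    exact this.symm
  have hsum : (g ≫ i + f ≫ j) + (f ≫ i + g ≫ j) = (f + g) ≫ (i + j) := by
    rw [En.comp_add, En.add_comp, En.add_comp]
    abel
  have hkey : (f ≫ i + g ≫ j) + (f ≫ i + g ≫ j) = (g ≫ i + f ≫ j) + (f ≫ i + g ≫ j) := by
    calc _ = ((g ≫ i + f ≫ j) + (f ≫ i + g ≫ j)) ≫ p := by rw [En.add_comp, hswap, hfp]
      _ = _ := by rw [hsum, Category.assoc, hdp]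
  have := hom_add_right_cancel En hbp heq hkey
  rw [← hi f g, this, hi]

end Dagger

/-! ### The semiring of scalars -/

section Scalars

variable {C : Type u} [Category.{v} C] [MonoidalCategory C]

lemma scalar_comm (a b : 𝟙_ C ⟶ 𝟙_ C) : a ≫ b = b ≫ a := by
  have h := whisker_exchange a b
  rw [id_whiskerLeft, whiskerRight_id, unitors_equal, unitors_inv_equal] at h
  simpa using h.symm

variable [∀ X Y : C, AddCommMonoid (X ⟶ Y)]

/-- The semiring of scalars, with the given addition, and composition as multiplication. -/
abbrev scalarSemiring (En : CMonEnriched C) : CommSemiring (𝟙_ C ⟶ 𝟙_ C) :=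
  { (inferInstance : AddCommMonoid (𝟙_ C ⟶ 𝟙_ C)) with
    mul := fun a b => a ≫ b
    one := 𝟙 _
    left_distrib := fun a b c => En.comp_add a b c
    right_distrib := fun a b c => En.add_comp a b c
    zero_mul := fun a => En.zero_comp a
    mul_zero := fun a => En.comp_zero a
    mul_assoc := fun a b c => Category.assoc a b c
    one_mul := fun a => Category.id_comp a
    mul_one := fun a => Category.comp_id a
    mul_comm := fun a b => scalar_comm a b }

variable {D : DaggerData C}

/-- Nonzero scalars cancel: if `s ≫ a = s ≫ b`, then `s` factors through the equalizer of `a` and `b`,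
which by simplicity of the unit is zero or invertible. -/
lemma scalar_cancel (En : CMonEnriched C) (heq : HasDagEqualizers D)
    (hsimple : ∀ {X : C} (m : X ⟶ 𝟙_ C), Mono m → m = 0 ∨ IsIso m)
    {s a b : 𝟙_ C ⟶ 𝟙_ C} (h : s ≫ a = s ≫ b) : s = 0 ∨ a = b := by
  obtain ⟨E, e, he, -, huniv⟩ := heq a b
  have hmono : Mono e := ⟨fun g g' hg =>
    (huniv (g' ≫ e) (by rw [Category.assoc, Category.assoc, he])).unique hg rfl⟩
  obtain ⟨t, ht, -⟩ := huniv s h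
  rcases hsimple e hmono with h0 | hiso
  · left
    rw [← ht, h0, En.comp_zero]
  · right
    exact (cancel_epi e).1 he

/-- Formal differences of scalars have no zero divisors. Let `p` be the projection onto the
†-equalizer of `(c, d)` and `(d, c)` on `I ⊕ I`. It fixes `(a, b)` and the diagonal, so either `a = b`
or its off-diagonal entry vanishes; in the latter case `p` fixes the first injection, so `c = d`. -/
lemma scalar_domain [HasZeroObject C] (En : CMonEnriched C)
    (hbp : HasFiniteDagBiproducts D) (heq : HasDagEqualizers D)
    (hsimple : ∀ {X : C} (m : X ⟶ 𝟙_ C), Mono m → m = 0 ∨ IsIso m)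
    {a b c d : 𝟙_ C ⟶ 𝟙_ C} (H : a ≫ c + b ≫ d = a ≫ d + b ≫ c) : a = b ∨ c = d := by
  obtain ⟨P, i, j, hii, hjj, hij, hji, hP⟩ := exists_double hbp (𝟙_ C)
  have hi (f h : 𝟙_ C ⟶ 𝟙_ C) : i ≫ (D.dag i ≫ f + D.dag j ≫ h) = f := by
    rw [En.comp_add, ← Category.assoc, ← Category.assoc, hii, hij, En.zero_comp, add_zero,
      Category.id_comp]
  have hj (f h : 𝟙_ C ⟶ 𝟙_ C) : j ≫ (D.dag i ≫ f + D.dag j ≫ h) = h := by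
    rw [En.comp_add, ← Category.assoc, ← Category.assoc, hjj, hji, En.zero_comp, zero_add,
      Category.id_comp]
  obtain ⟨p, hp, hpuv, hfix⟩ := exists_proj heq
    (D.dag i ≫ c + D.dag j ≫ d) (D.dag i ≫ d + D.dag j ≫ c)
  have hdp : (i + j) ≫ p = i + j := hfix _ (by
    rw [En.add_comp, En.add_comp, hi, hj, hi, hj, add_comm])
  have habp : (a ≫ i + b ≫ j) ≫ p = a ≫ i + b ≫ j := hfix _ (by
    rw [En.add_comp, En.add_comp, Category.assoc, Category.assoc, Category.assoc, Category.assoc,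
      hi, hj, hi, hj, H])
  have h₁ : i ≫ p ≫ D.dag i + j ≫ p ≫ D.dag i = 𝟙 _ := by
    have := congrArg (fun w => w ≫ D.dag i) hdp
    simpa only [En.add_comp, hii, hji, add_zero, Category.assoc] using this
  have h₂ : a ≫ i ≫ p ≫ D.dag i + b ≫ j ≫ p ≫ D.dag i = a := by
    have := congrArg (fun w => w ≫ D.dag i) habp
    simpa only [En.add_comp, hii, hji, add_zero, Category.assoc, En.comp_zero,
      Category.comp_id] using this
  have h₃ : b ≫ (j ≫ p ≫ D.dag i) = a ≫ (j ≫ p ≫ D.dag i) := by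
    apply hom_add_right_cancel En hbp heq (h := a ≫ i ≫ p ≫ D.dag i)
    rw [add_comm, h₂, add_comm, ← En.comp_add, h₁, Category.comp_id]
  rw [scalar_comm b, scalar_comm a] at h₃
  rcases scalar_cancel En heq hsimple h₃ with h0 | hab
  · right
    have hipj : i ≫ p ≫ D.dag j = 0 := by
      have := congrArg D.dag h0
      rwa [D.dag_comp, D.dag_comp, D.dag_dag, hp, dag_zero En, Category.assoc] at this
    rw [h0, add_zero] at h₁
    have hip : i ≫ p = i := by
      calc i ≫ p = (i ≫ p ≫ D.dag i) ≫ i + (i ≫ p ≫ D.dag j) ≫ j := by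
            rw [← Category.comp_id (i ≫ p), ← hP]
            simp only [En.comp_add, Category.assoc]
        _ = i := by rw [h₁, hipj, En.zero_comp, add_zero, Category.id_comp]
    have hiuv := congrArg (fun w => i ≫ w) hpuv
    rwa [← Category.assoc i p, ← Category.assoc i p, hip, hi, hi] at hiuv
  · exact Or.inl hab.symm

/-- Anisotropy of formal differences of scalars, from `eq_of_diff_norm_eq_zero` applied to the vectors
`I ⟶ Iⁿ` with entries `a k` and `b k`. -/
lemma scalar_anisotropic [HasZeroObject C] (En : CMonEnriched C)
    (hbp : HasFiniteDagBiproducts D) (heq : HasDagEqualizers D)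
    (n : ℕ) (a b : Fin n → (𝟙_ C ⟶ 𝟙_ C))
    (H : ∑ k, (a k ≫ D.dag (a k) + b k ≫ D.dag (b k)) =
      ∑ k, (a k ≫ D.dag (b k) + b k ≫ D.dag (a k))) : a = b := by
  obtain ⟨P, i, hii, hij, -⟩ := hbp n (fun _ => 𝟙_ C)
  have hentry (a : Fin n → (𝟙_ C ⟶ 𝟙_ C)) (l : Fin n) : (∑ k, a k ≫ i k) ≫ D.dag (i l) = a l := by
    rw [En.sum_comp, Finset.sum_eq_single l]
    · rw [Category.assoc, hii, Category.comp_id]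
    · intro k _ hk
      rw [Category.assoc, hij k l hk, En.comp_zero]
    · simp
  have hpair (a b : Fin n → (𝟙_ C ⟶ 𝟙_ C)) :
      (∑ k, a k ≫ i k) ≫ D.dag (∑ k, b k ≫ i k) = ∑ k, a k ≫ D.dag (b k) := by
    rw [dag_sum En hbp, En.comp_sum]
    refine Finset.sum_congr rfl fun k _ => ?_
    rw [D.dag_comp, ← Category.assoc, hentry]
  have hab : ∑ k, a k ≫ i k = ∑ k, b k ≫ i k := by
    apply eq_of_diff_norm_eq_zero En hbp heq
    rw [hpair, hpair, hpair, hpair, ← Finset.sum_add_distrib, ← Finset.sum_add_distrib, H]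
  funext l
  rw [← hentry a l, hab, hentry]

end Scalars

/-! ### The ring of differences of a cancellative semiring -/

/-- On pairs `(a, b)` of elements of `S`, multiplied as formal differences `a - b` (that is, on
`S[ω]` with `ω ^ 2 = 1`), the congruence identifying pairs with equal difference. -/
def diffCon (S : Type*) [CommSemiring S] [IsCancelAdd S] :
    RingCon (QuadraticAlgebra S 1 0) where
  r x y := x.re + y.im = y.re + x.im
  iseqv :=
    { refl := fun _ => rfl
      symm := fun h => h.symm
      trans := by
        intro x y z h₁ h₂
        apply add_right_cancel (b := y.re + y.im)
        linear_combination h₁ + h₂ }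
  add' := by
    intro w x y z h₁ h₂
    simp only [QuadraticAlgebra.re_add, QuadraticAlgebra.im_add]
    linear_combination h₁ + h₂
  mul' := by
    intro w x y z h₁ h₂
    simp only [QuadraticAlgebra.re_mul, QuadraticAlgebra.im_mul]
    -- Both products are compared with the mixed product `x * y`.
    apply add_right_cancel (b := x.re * y.re + x.im * y.im + x.re * y.im + x.im * y.re)
    linear_combination h₁ * y.re + h₁.symm * y.im + x.re * h₂ + x.im * h₂.symm

/-- The ring of formal differences of a cancellative commutative semiring. -/
abbrev DiffRing (S : Type*) [CommSemiring S] [IsCancelAdd S] := (diffCon S).Quotient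

namespace DiffRing

variable {S : Type*} [CommSemiring S] [IsCancelAdd S]

/-- The formal difference `a - b`. -/
def mk (a b : S) : DiffRing S := ((⟨a, b⟩ : QuadraticAlgebra S 1 0) : (diffCon S).Quotient)

lemma mk_eq_iff {a b c d : S} : mk a b = mk c d ↔ a + d = c + b := by
  unfold mk
  rw [RingCon.eq]
  rfl

lemma ind {p : DiffRing S → Prop} (h : ∀ a b, p (mk a b)) (x : DiffRing S) : p x := by
  induction x using Quotient.inductionOn' with
  | h x => exact h x.re x.im

lemma mk_add (a b c d : S) : mk a b + mk c d = mk (a + c) (b + d) := rfl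

lemma mk_mul (a b c d : S) : mk a b * mk c d = mk (a * c + b * d) (a * d + b * c) := by
  unfold mk
  rw [← RingCon.coe_mul]
  congr 1
  ext <;> simp

lemma mk_zero : (mk 0 0 : DiffRing S) = 0 := rfl

lemma mk_one : (mk 1 0 : DiffRing S) = 1 := rfl

lemma mk_eq_zero_iff {a b : S} : mk a b = 0 ↔ a = b := by
  rw [← mk_zero, mk_eq_iff]; simp

instance : Neg (DiffRing S) := ⟨fun x => mk 0 1 * x⟩

instance : CommRing (DiffRing S) :=
  { (inferInstance : CommSemiring (DiffRing S)), (inferInstance : Neg (DiffRing S)) with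
    zsmul := zsmulRec
    neg_add_cancel := by
      intro x
      induction x using ind with
      | h a b =>
        change mk 0 1 * mk a b + mk a b = 0
        rw [mk_mul, mk_add, mk_eq_zero_iff]
        ring }

/-- The embedding `a ↦ a - 0`. -/
def of : S →+* DiffRing S where
  toFun a := mk a 0
  map_zero' := rfl
  map_one' := rfl
  map_add' a b := by rw [mk_add, add_zero]
  map_mul' a b := by rw [mk_mul]; simp

lemma of_apply (a : S) : of a = mk a 0 := rfl

lemma of_injective : Function.Injective (of : S → DiffRing S) := by
  intro a b h
  simpa [of_apply, mk_eq_iff] using h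

lemma mk_eq_sub (a b : S) : mk a b = of a - of b := by
  rw [eq_sub_iff_add_eq, of_apply, of_apply, mk_add, mk_eq_iff]
  ring

/-- The ring endomorphism of `DiffRing S` induced by an endomorphism of `S`. -/
def map (σ : S →+* S) : DiffRing S →+* DiffRing S where
  toFun := Quotient.map' (fun x => ⟨σ x.re, σ x.im⟩) (by
    intro x y h
    change σ x.re + σ y.im = σ y.re + σ x.im
    rw [← map_add, ← map_add]
    exact congrArg σ h)
  map_zero' := by
    change mk (σ 0) (σ 0) = mk 0 0
    simp
  map_one' := by
    change mk (σ 1) (σ 0) = mk 1 0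
    simp
  map_add' x y := by
    induction x using ind with
    | h a b =>
      induction y using ind with
      | h c d =>
        change mk (σ (a + c)) (σ (b + d)) = mk (σ a + σ c) (σ b + σ d)
        simp
  map_mul' x y := by
    induction x using ind with
    | h a b =>
      induction y using ind with
      | h c d =>
        rw [mk_mul]
        change mk (σ (a * c + b * d)) (σ (a * d + b * c)) = mk (σ a) (σ b) * mk (σ c) (σ d)
        simp [mk_mul]

lemma map_mk (σ : S →+* S) (a b : S) : map σ (mk a b) = mk (σ a) (σ b) := rfl

lemma sum_mk {n : ℕ} (a b : Fin n → S) : ∑ k, mk (a k) (b k) = mk (∑ k, a k) (∑ k, b k) := by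
  simp only [mk_eq_sub, map_sum, Finset.sum_sub_distrib]

end DiffRing

/-! ### Orderings and fraction fields -/

/-- Artin–Schreier: a field in which `-1` is not a sum of squares has a positive cone, obtained as
a maximal subsemiring containing the squares and omitting `-1`. -/
theorem exists_positive_cone {K : Type*} [Field K] (h : ¬ IsSumSq (-1 : K)) :
    ∃ P : Subsemiring K, (∀ x, x ∈ P ∨ -x ∈ P) ∧ ∀ x, x ∈ P → -x ∈ P → x = 0 := by
  obtain ⟨P, -, hP⟩ := zorn_le_nonempty₀
    {P : Subsemiring K | (∀ x, x * x ∈ P) ∧ (-1 : K) ∉ P}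
    (by
      intro c hc hchain y hy
      have hne : c.Nonempty := ⟨y, hy⟩
      refine ⟨sSup c, ⟨fun x => ?_, fun hx => ?_⟩, fun z hz => le_sSup hz⟩
      · exact (le_sSup hy : y ≤ sSup c) ((hc hy).1 x)
      · rw [Subsemiring.mem_sSup_of_directedOn hne hchain.directedOn] at hx
        obtain ⟨s, hs, hs'⟩ := hx
        exact (hc hs).2 hs')
    (Subsemiring.sumSq K) ⟨fun x => by simp, by simpa using h⟩
  obtain ⟨hsq, hneg⟩ := hP.prop
  refine ⟨P, fun a => ?_, fun x hx hx' => ?_⟩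
  · by_contra! hcon
    obtain ⟨ha, hna⟩ := hcon
    -- `P - a P` is a strictly larger subsemiring; it still omits `-1` since `a ∉ P`.
    let Q : Subsemiring K :=
      { carrier := {x | ∃ p ∈ P, ∃ q ∈ P, x = p - a * q}
        zero_mem' := ⟨0, P.zero_mem, 0, P.zero_mem, by ring⟩
        one_mem' := ⟨1, P.one_mem, 0, P.zero_mem, by ring⟩
        add_mem' := by
          rintro _ _ ⟨p, hp, q, hq, rfl⟩ ⟨p', hp', q', hq', rfl⟩
          exact ⟨p + p', P.add_mem hp hp', q + q', P.add_mem hq hq', by ring⟩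
        mul_mem' := by
          rintro _ _ ⟨p, hp, q, hq, rfl⟩ ⟨p', hp', q', hq', rfl⟩
          exact ⟨p * p' + a * a * (q * q'),
            P.add_mem (P.mul_mem hp hp') (P.mul_mem (hsq a) (P.mul_mem hq hq')),
            p * q' + q * p', P.add_mem (P.mul_mem hp hq') (P.mul_mem hq hp'), by ring⟩ }
    have hPQ : P ≤ Q := fun x hx => ⟨x, hx, 0, P.zero_mem, by ring⟩
    have hQneg : (-1 : K) ∉ Q := by
      rintro ⟨p, hp, q, hq, hpq⟩
      have hq0 : q ≠ 0 := by
        rintro rfl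
        apply hneg
        rw [hpq]
        simpa using hp
      apply ha
      have : a = (1 + p) * q * (q⁻¹ * q⁻¹) := by
        field_simp
        linear_combination hpq
      rw [this]
      exact P.mul_mem (P.mul_mem (P.add_mem P.one_mem hp) hq) (hsq _)
    have hQP : Q ≤ P := hP.le_of_ge ⟨fun x => hPQ (hsq x), hQneg⟩ hPQ
    exact hna (hQP ⟨0, P.zero_mem, 1, P.one_mem, by ring⟩)
  · by_contra hx0
    apply hneg
    have : (-1 : K) = -x * x * (x⁻¹ * x⁻¹) := by field_simp
    rw [this]
    exact P.mul_mem (P.mul_mem hx' hx) (hsq _)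

lemma IsSumSq.exists_sum {K : Type*} [CommRing K] {x : K} (h : IsSumSq x) :
    ∃ (n : ℕ) (f : Fin n → K), x = ∑ k, f k * f k := by
  induction h with
  | zero => exact ⟨0, Fin.elim0, by simp⟩
  | sq_add a _ ih =>
    obtain ⟨n, f, rfl⟩ := ih
    exact ⟨n + 1, Fin.cons a f, by simp [Fin.sum_univ_succ]⟩

/-- A domain with an anisotropic involution: its fraction field inherits the involution, and clearing
denominators in a vanishing sum of squares shows that `-1` is not a sum of squares in the fixed
field, so that Artin–Schreier applies there. -/
theorem domain_embedding {R : Type v} [CommRing R] [IsDomain R]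
    (ρ : R →+* R) (hρρ : ∀ x, ρ (ρ x) = x)
    (hanis : ∀ (n : ℕ) (r : Fin n → R), ∑ k, r k * ρ (r k) = 0 → r = 0) :
    ∃ (F : Type v) (_ : Field F) (_ : CharZero F) (σ : F →+* F),
      (∀ x : F, σ (σ x) = x) ∧
      ∃ φ : R →+* F, Function.Injective φ ∧ (∀ a, φ (ρ a) = σ (φ a)) ∧
        ∃ le : F → F → Prop,
          (∀ x, σ x = x → le x x) ∧
          (∀ x y, σ x = x → σ y = y → le x y → le y x → x = y) ∧
          (∀ x y z, σ x = x → σ y = y → σ z = z → le x y → le y z → le x z) ∧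
          (∀ x y, σ x = x → σ y = y → le x y ∨ le y x) ∧
          (∀ x y z, σ x = x → σ y = y → σ z = z → le x y → le (x + z) (y + z)) ∧
          (∀ x y, σ x = x → σ y = y → le 0 x → le 0 y → le 0 (x * y)) := by
  let F := FractionRing R
  let e : R ≃+* R := RingEquiv.ofRingHom ρ ρ (RingHom.ext hρρ) (RingHom.ext hρρ)
  let σ : F →+* F := (IsFractionRing.ringEquivOfRingEquiv e : F ≃+* F).toRingHom
  have hσ : ∀ r : R, σ (algebraMap R F r) = algebraMap R F (ρ r) := fun r =>
    IsFractionRing.ringEquivOfRingEquiv_algebraMap e r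
  have hσσ : ∀ x, σ (σ x) = x := by
    intro x
    obtain ⟨p, q, hq, rfl⟩ := IsFractionRing.div_surjective (A := R) x
    simp only [map_div₀, hσ, hρρ]
  have hinj : Function.Injective (algebraMap R F) := IsFractionRing.injective R F
  let K : Subfield F := σ.eqLocusField (RingHom.id F)
  have hsemireal : ¬ IsSumSq (-1 : K) := by
    intro hs
    obtain ⟨n, f, hf⟩ := hs.exists_sum
    -- Prepending `1` to the `f k` gives a vanishing sum of squares in `F`; clear denominators.
    let g : Fin (n + 1) → K := Fin.cons 1 f
    have hg : ∑ k, g k * g k = 0 := by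
      simp [g, Fin.sum_univ_succ, ← hf]
    obtain ⟨s, hs⟩ := IsLocalization.exist_integer_multiples (nonZeroDivisors R) Finset.univ
      (fun k => (g k : F))
    have hs' : ∀ k, ∃ r : R, algebraMap R F r = algebraMap R F s * (g k : F) := by
      intro k
      obtain ⟨r, hr⟩ := hs k (Finset.mem_univ k)
      exact ⟨r, by rw [hr, Algebra.smul_def]⟩
    choose r hr using hs'
    have hr0 : ∑ k, r k * ρ (r k) = 0 := by
      apply hinj
      rw [map_sum, map_zero]
      have hterm : ∀ k, algebraMap R F (r k * ρ (r k)) =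
          algebraMap R F s * σ (algebraMap R F s) * ((g k * g k : K) : F) := by
        intro k
        have hgk : σ (g k : F) = g k := (g k).2
        rw [map_mul, ← hσ, hr, map_mul, hgk]
        push_cast
        ring
      rw [Finset.sum_congr rfl fun k _ => hterm k, ← Finset.mul_sum,
        ← AddSubmonoidClass.coe_finsetSum, hg]
      simp
    have h0 := congrFun (hanis _ r hr0) 0
    have h1 := hr 0
    rw [h0] at h1
    simp only [Pi.zero_apply, map_zero, g, Fin.cons_zero] at h1
    have : algebraMap R F s ≠ 0 :=
      (map_ne_zero_iff _ hinj).2 (nonZeroDivisors.ne_zero s.2)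
    apply this
    simpa using h1.symm
  have : IsSemireal K := isSemireal_iff_not_isSumSq_neg_one.2 hsemireal
  have : CharZero F := (charZero_of_injective_ringHom (f := K.subtype) K.subtype.injective)
  obtain ⟨P, hPtot, hPanti⟩ := exists_positive_cone hsemireal
  refine ⟨F, inferInstance, this, σ, hσσ, algebraMap R F, hinj, fun r => (hσ r).symm,
     fun x y => ∃ p ∈ P, y - x = (p : F), ?_, ?_, ?_, ?_, ?_, ?_⟩
  · exact fun x _ => ⟨0, P.zero_mem, by simp⟩
  · rintro x y - - ⟨p, hp, hxy⟩ ⟨q, hq, hyx⟩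
    have : q = -p := by
      apply Subtype.ext
      push_cast
      rw [← hxy, ← hyx]; ring
    have hp0 : p = 0 := hPanti p hp (this ▸ hq)
    rw [hp0] at hxy
    exact (sub_eq_zero.1 (by simpa using hxy)).symm
  · rintro x y z - - - ⟨p, hp, hxy⟩ ⟨q, hq, hyz⟩
    exact ⟨p + q, P.add_mem hp hq, by push_cast; rw [← hxy, ← hyz]; ring⟩
  · intro x y hx hy
    have hmem : y - x ∈ K := K.sub_mem hy hx
    rcases hPtot ⟨y - x, hmem⟩ with h | h
    · exact Or.inl ⟨_, h, rfl⟩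
    · exact Or.inr ⟨_, h, by simp⟩
  · rintro x y z - - - ⟨p, hp, hxy⟩
    exact ⟨p, hp, by rw [← hxy]; ring⟩
  · rintro x y - - ⟨p, hp, hx⟩ ⟨q, hq, hy⟩
    exact ⟨p * q, P.mul_mem hp hq, by push_cast; rw [← hx, ← hy]; ring⟩

open DiffRing in
/-- For formal differences, `hdom` says that they form a domain and `hpos` that the induced involution
is anisotropic. -/
theorem semiring_embedding {S : Type v} [CommSemiring S] [IsCancelAdd S] [Nontrivial S]
    (τ : S →+* S) (hτ : ∀ a, τ (τ a) = a)
    (hdom : ∀ a b c d : S, a * c + b * d = a * d + b * c → a = b ∨ c = d)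
    (hpos : ∀ (n : ℕ) (a b : Fin n → S),
      ∑ k, (a k * τ (a k) + b k * τ (b k)) = ∑ k, (a k * τ (b k) + b k * τ (a k)) → a = b) :
    ∃ (F : Type v) (_ : Field F) (_ : CharZero F) (σ : F →+* F),
      (∀ x : F, σ (σ x) = x) ∧
      ∃ φ : S →+* F, Function.Injective φ ∧ (∀ a, φ (τ a) = σ (φ a)) ∧
        ∃ le : F → F → Prop,
          (∀ x, σ x = x → le x x) ∧
          (∀ x y, σ x = x → σ y = y → le x y → le y x → x = y) ∧
          (∀ x y z, σ x = x → σ y = y → σ z = z → le x y → le y z → le x z) ∧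
          (∀ x y, σ x = x → σ y = y → le x y ∨ le y x) ∧
          (∀ x y z, σ x = x → σ y = y → σ z = z → le x y → le (x + z) (y + z)) ∧
          (∀ x y, σ x = x → σ y = y → le 0 x → le 0 y → le 0 (x * y)) := by
  have : Nontrivial (DiffRing S) := of_injective.nontrivial
  have : NoZeroDivisors (DiffRing S) := ⟨by
    intro x y hxy
    induction x using ind with
    | h a b =>
      induction y using ind with
      | h c d =>
        rw [mk_mul, mk_eq_zero_iff] at hxy
        rw [mk_eq_zero_iff, mk_eq_zero_iff]
        exact hdom a b c d hxy⟩
  have : IsDomain (DiffRing S) := NoZeroDivisors.to_isDomain _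
  let ρ : DiffRing S →+* DiffRing S := DiffRing.map τ
  have hρρ : ∀ x, ρ (ρ x) = x := by
    intro x
    induction x using ind with
    | h a b => simp only [ρ, map_mk, hτ]
  have hanis : ∀ (n : ℕ) (r : Fin n → DiffRing S), ∑ k, r k * ρ (r k) = 0 → r = 0 := by
    intro n r hr
    have hex : ∀ k, ∃ a b : S, r k = mk a b := fun k => by
      induction r k using ind with
      | h a b => exact ⟨a, b, rfl⟩
    choose a b hab using hex
    simp only [hab, ρ, map_mk, mk_mul, sum_mk, mk_eq_zero_iff] at hr
    have := hpos n a b hr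
    funext k
    rw [hab, this, Pi.zero_apply, mk_eq_zero_iff]
  obtain ⟨F, _, hchar, σ, hσσ, φ, hφ, hφσ, hle⟩ := domain_embedding ρ hρρ hanis
  exact ⟨F, _, hchar, σ, hσσ, φ.comp of, hφ.comp of_injective,
    fun a => by
      rw [RingHom.comp_apply, RingHom.comp_apply, ← hφσ, of_apply, of_apply, map_mk, map_zero],
    hle⟩

/-- Main embedding theorem: in a nontrivial monoidal †-category, enriched in
commutative monoids, with simple tensor unit, a zero object, finite †-biproducts
and †-equalizers of all parallel pairs, the involutive semiring of scalars embeds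
into an involutive field of characteristic 0 whose fixed field is orderable. -/
theorem stmt17 {C : Type u} [Category.{v} C] [MonoidalCategory C]
    [∀ X Y : C, AddCommMonoid (X ⟶ Y)] [HasZeroObject C]
    (D : DaggerData C) (En : CMonEnriched C)
    (hbp : HasFiniteDagBiproducts D) (heq : HasDagEqualizers D)
    (hsimple : ∀ {X : C} (m : X ⟶ 𝟙_ C), Mono m → m = 0 ∨ IsIso m)
    (hnontriv : (0 : 𝟙_ C ⟶ 𝟙_ C) ≠ 𝟙 (𝟙_ C)) :
    ∃ (F : Type v) (_ : Field F) (_ : CharZero F) (σ : F →+* F),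
      (∀ x : F, σ (σ x) = x) ∧
      ∃ φ : (𝟙_ C ⟶ 𝟙_ C) → F,
        Function.Injective φ ∧
        φ 0 = 0 ∧
        φ (𝟙 (𝟙_ C)) = 1 ∧
        (∀ a b : 𝟙_ C ⟶ 𝟙_ C, φ (a + b) = φ a + φ b) ∧
        (∀ a b : 𝟙_ C ⟶ 𝟙_ C, φ (a ≫ b) = φ a * φ b) ∧
        (∀ a : 𝟙_ C ⟶ 𝟙_ C, φ (D.dag a) = σ (φ a)) ∧
        ∃ le : F → F → Prop,
          (∀ x, σ x = x → le x x) ∧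
          (∀ x y, σ x = x → σ y = y → le x y → le y x → x = y) ∧
          (∀ x y z, σ x = x → σ y = y → σ z = z → le x y → le y z → le x z) ∧
          (∀ x y, σ x = x → σ y = y → le x y ∨ le y x) ∧
          (∀ x y z, σ x = x → σ y = y → σ z = z → le x y → le (x + z) (y + z)) ∧
          (∀ x y, σ x = x → σ y = y → le 0 x → le 0 y → le 0 (x * y)) := by
  let _ : CommSemiring (𝟙_ C ⟶ 𝟙_ C) := scalarSemiring En
  have : IsRightCancelAdd (𝟙_ C ⟶ 𝟙_ C) := ⟨fun _ _ _ h => hom_add_right_cancel En hbp heq h⟩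
  have : IsCancelAdd (𝟙_ C ⟶ 𝟙_ C) := AddCommMagma.IsRightCancelAdd.toIsCancelAdd _
  have : Nontrivial (𝟙_ C ⟶ 𝟙_ C) := ⟨⟨_, _, hnontriv⟩⟩
  let τ : (𝟙_ C ⟶ 𝟙_ C) →+* (𝟙_ C ⟶ 𝟙_ C) :=
    { toFun := fun a => D.dag a
      map_zero' := dag_zero En
      map_one' := D.dag_id _
      map_add' := fun a b => dag_add En hbp a b
      map_mul' := fun a b => (D.dag_comp a b).trans (scalar_comm _ _) }
  obtain ⟨F, hF, hchar, σ, hσσ, φ, hφ, hφσ, hle⟩ := semiring_embedding τ D.dag_dag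
    (fun a b c d H => scalar_domain En hbp heq hsimple H)
    (fun n a b H => scalar_anisotropic En hbp heq n a b H)
  exact ⟨F, hF, hchar, σ, hσσ, φ, hφ, φ.map_zero, φ.map_one, φ.map_add, φ.map_mul, hφσ, hle⟩
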